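/- The improper integral over the real line ∫_{−∞}^{∞} (3x³−6ix²−11x+4i)/((x−i)⁵(x+i)³) dx, where the integrand is viewed as a function from ℝ to ℂ, equals −25πi/16. -/

import Mathlib

/-!
Write `u = (x - I)⁻¹` and `v = (x + I)⁻¹`. Partial fractions turn the integrand into a polynomial
in `u` and `v` whose only simple-pole part is `-(25/32) (u - v) = -(25 I/16) / (1 + x²)`. Hence it
has the primitive `primitivePart + (-25 I/16) arctan x`, where `primitivePart` is a polynomial in
`u`, `v` without constant term and so vanishes at `±∞`. The fundamental theorem of calculus on `ℝ`
gives `(-25 I/16) (π/2 - (-π/2))`. Integrability holds because the integrand is `u²` times a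
bounded function, and `‖u²‖ = 1 / (1 + x²)`.
-/
open Complex MeasureTheory Real

lemma ofReal_sub_I_ne_zero (x : ℝ) : (x : ℂ) - I ≠ 0 := by
  intro h
  simpa using congrArg Complex.im h

lemma ofReal_add_I_ne_zero (x : ℝ) : (x : ℂ) + I ≠ 0 := by
  intro h
  simpa using congrArg Complex.im h

lemma one_add_ofReal_sq (x : ℝ) : 1 + (x : ℂ) ^ 2 = (x - I) * (x + I) := by
  linear_combination I_sq

lemma norm_inv_ofReal_sub_I_sq (x : ℝ) : ‖((x : ℂ) - I)⁻¹‖ ^ 2 = (1 + x ^ 2)⁻¹ := by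
  rw [norm_inv, inv_pow, ← Complex.normSq_eq_norm_sq, Complex.normSq_apply]
  simp
  ring

lemma norm_inv_ofReal_add_I_sq (x : ℝ) : ‖((x : ℂ) + I)⁻¹‖ ^ 2 = (1 + x ^ 2)⁻¹ := by
  rw [norm_inv, inv_pow, ← Complex.normSq_eq_norm_sq, Complex.normSq_apply]
  simp
  ring

lemma norm_inv_ofReal_sub_I_le (x : ℝ) : ‖((x : ℂ) - I)⁻¹‖ ≤ 1 := by
  rw [← sq_le_one_iff₀ (norm_nonneg _), norm_inv_ofReal_sub_I_sq]
  exact inv_le_one_of_one_le₀ (by nlinarith [sq_nonneg x])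

lemma norm_inv_ofReal_add_I_le (x : ℝ) : ‖((x : ℂ) + I)⁻¹‖ ≤ 1 := by
  rw [← sq_le_one_iff₀ (norm_nonneg _), norm_inv_ofReal_add_I_sq]
  exact inv_le_one_of_one_le₀ (by nlinarith [sq_nonneg x])

/-- The rational part of the primitive of the integrand, in terms of `u = (x - I)⁻¹` and
`v = (x + I)⁻¹`. -/
noncomputable def primitivePart (u v : ℂ) : ℂ :=
  -(11 / 16) * I * u - 3 / 16 * u ^ 2 + I / 12 * u ^ 3 - 1 / 8 * u ^ 4 - 7 / 8 * I * v
    + 3 / 8 * v ^ 2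

/-- Expanding the numerator in powers of `x + I` makes the decay of the integrand visible. -/
lemma integrand_eq (x : ℝ) :
    (3 * (x : ℂ) ^ 3 - 6 * I * (x : ℂ) ^ 2 - 11 * (x : ℂ) + 4 * I) /
        (((x : ℂ) - I) ^ 5 * ((x : ℂ) + I) ^ 3) =
      ((x : ℂ) - I)⁻¹ ^ 2 * (((x : ℂ) - I)⁻¹ ^ 3 * (3 - 15 * I * ((x : ℂ) + I)⁻¹
        - 32 * ((x : ℂ) + I)⁻¹ ^ 2 + 24 * I * ((x : ℂ) + I)⁻¹ ^ 3)) := by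
  have h1 := ofReal_sub_I_ne_zero x
  have h2 := ofReal_add_I_ne_zero x
  have hN : 3 * (x : ℂ) ^ 3 - 6 * I * (x : ℂ) ^ 2 - 11 * (x : ℂ) + 4 * I =
      3 * (x + I) ^ 3 - 15 * I * (x + I) ^ 2 - 32 * (x + I) + 24 * I := by
    linear_combination (21 * (x : ℂ) + 12 * I) * I_sq
  rw [hN]
  generalize (x : ℂ) - I = a at *
  generalize (x : ℂ) + I = b at *
  field_simp

lemma integrable_integrand :
    Integrable (fun x : ℝ => (3 * (x : ℂ) ^ 3 - 6 * I * (x : ℂ) ^ 2 - 11 * (x : ℂ) + 4 * I) /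
        (((x : ℂ) - I) ^ 5 * ((x : ℂ) + I) ^ 3)) := by
  have hc : Continuous (fun x : ℝ =>
      (3 * (x : ℂ) ^ 3 - 6 * I * (x : ℂ) ^ 2 - 11 * (x : ℂ) + 4 * I) /
        (((x : ℂ) - I) ^ 5 * ((x : ℂ) + I) ^ 3)) := by
    refine Continuous.div (by fun_prop) (by fun_prop) fun x => ?_
    exact mul_ne_zero (pow_ne_zero _ (ofReal_sub_I_ne_zero x))
      (pow_ne_zero _ (ofReal_add_I_ne_zero x))
  refine (integrable_inv_one_add_sq.const_mul 74).mono' hc.aestronglyMeasurable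
    (Filter.Eventually.of_forall fun x => ?_)
  rw [integrand_eq, norm_mul, norm_pow, norm_inv_ofReal_sub_I_sq, mul_comm]
  refine mul_le_mul_of_nonneg_right ?_ (by positivity)
  have hu := norm_inv_ofReal_sub_I_le x
  have hv := norm_inv_ofReal_add_I_le x
  generalize ((x : ℂ) - I)⁻¹ = u at *
  generalize ((x : ℂ) + I)⁻¹ = v at *
  have hv2 : ‖v‖ ^ 2 ≤ 1 := pow_le_one₀ (norm_nonneg _) hv
  have hv3 : ‖v‖ ^ 3 ≤ 1 := pow_le_one₀ (norm_nonneg _) hv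
  have hu3 : ‖u‖ ^ 3 ≤ 1 := pow_le_one₀ (norm_nonneg _) hu
  have hq : ‖3 - 15 * I * v - 32 * v ^ 2 + 24 * I * v ^ 3‖ ≤ 74 := by
    calc ‖3 - 15 * I * v - 32 * v ^ 2 + 24 * I * v ^ 3‖
        ≤ ‖(3 : ℂ)‖ + ‖15 * I * v‖ + ‖32 * v ^ 2‖ + ‖24 * I * v ^ 3‖ :=
          (norm_add_le _ _).trans (add_le_add_left ((norm_sub_le _ _).trans
            (add_le_add_left (norm_sub_le _ _) _)) _)
      _ = 3 + 15 * ‖v‖ + 32 * ‖v‖ ^ 2 + 24 * ‖v‖ ^ 3 := by simp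
      _ ≤ 74 := by linarith
  rw [norm_mul, norm_pow]
  calc ‖u‖ ^ 3 * _ ≤ 1 * 74 := mul_le_mul hu3 hq (norm_nonneg _) zero_le_one
    _ = 74 := one_mul _

lemma hasDerivAt_primitive (x : ℝ) :
    HasDerivAt (fun y : ℝ => primitivePart ((y : ℂ) - I)⁻¹ ((y : ℂ) + I)⁻¹
        + -25 / 16 * I * (Real.arctan y : ℂ))
      ((3 * (x : ℂ) ^ 3 - 6 * I * (x : ℂ) ^ 2 - 11 * (x : ℂ) + 4 * I) /
        (((x : ℂ) - I) ^ 5 * ((x : ℂ) + I) ^ 3)) x := by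
  have h1 := ofReal_sub_I_ne_zero x
  have h2 := ofReal_add_I_ne_zero x
  have hid : HasDerivAt (fun y : ℝ => (y : ℂ)) 1 x := Complex.ofRealCLM.hasDerivAt
  have hu : HasDerivAt (fun y : ℝ => ((y : ℂ) - I)⁻¹) _ x := (hid.sub_const I).fun_inv h1
  have hv : HasDerivAt (fun y : ℝ => ((y : ℂ) + I)⁻¹) _ x := (hid.add_const I).fun_inv h2
  have ha := (Real.hasDerivAt_arctan x).ofReal_comp.const_mul (-25 / 16 * I)
  have H := (((((((hu.const_mul (-(11 / 16) * I)).fun_sub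
    ((hu.fun_pow 2).const_mul (3 / 16))).fun_add ((hu.fun_pow 3).const_mul (I / 12))).fun_sub ((hu.fun_pow 4).const_mul (1 / 8))).fun_sub
    (hv.const_mul (7 / 8 * I))).fun_add ((hv.fun_pow 2).const_mul (3 / 8))).fun_add ha)
  unfold primitivePart
  refine H.congr_deriv ?_
  rw [integrand_eq]
  push_cast
  rw [one_add_ofReal_sq]
  -- With `a = x - I` and `b = x + I`, only `b = a + 2 I` and `I ^ 2 = -1` are needed.
  have hb : (x : ℂ) + I = (x - I) + 2 * I := by ring
  have hI : I ^ 2 = -1 := I_sq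
  clear H ha hu hv hid
  generalize (x : ℂ) - I = a at *
  generalize (x : ℂ) + I = b at *
  generalize I = j at *
  field_simp
  subst hb
  clear h1 h2
  grind

lemma tendsto_primitive {l : Filter ℝ} {t : ℝ} (hl : l ≤ Bornology.cobounded ℝ)
    (ht : Filter.Tendsto Real.arctan l (nhds t)) :
    Filter.Tendsto (fun y : ℝ => primitivePart ((y : ℂ) - I)⁻¹ ((y : ℂ) + I)⁻¹
        + -25 / 16 * I * (Real.arctan y : ℂ)) l (nhds (-25 / 16 * I * t)) := by
  have hx : Filter.Tendsto (fun y : ℝ => (y : ℂ)) l (Bornology.cobounded ℂ) := by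
    rw [← tendsto_norm_atTop_iff_cobounded]
    simpa only [Complex.norm_real] using (tendsto_norm_cobounded_atTop (E := ℝ)).mono_left hl
  have hu : Filter.Tendsto (fun y : ℝ => ((y : ℂ) - I)⁻¹) l (nhds 0) :=
    Filter.tendsto_inv₀_cobounded.comp
      ((tendsto_sub_const_cobounded I).comp hx)
  have hv : Filter.Tendsto (fun y : ℝ => ((y : ℂ) + I)⁻¹) l (nhds 0) :=
    Filter.tendsto_inv₀_cobounded.comp
      ((tendsto_add_const_cobounded I).comp hx)
  have hP : Continuous fun p : ℂ × ℂ => primitivePart p.1 p.2 := by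
    unfold primitivePart
    fun_prop
  have h := (hP.tendsto (0, 0)).comp (hu.prodMk_nhds hv)
  have ha := ((Complex.continuous_ofReal.tendsto t).comp ht).const_mul (-25 / 16 * I)
  simpa [primitivePart] using h.add ha

theorem stmt_12 :
    ∫ x : ℝ, (3 * (x : ℂ) ^ 3 - 6 * I * (x : ℂ) ^ 2 - 11 * (x : ℂ) + 4 * I) / (((x : ℂ) - I) ^ 5 * ((x : ℂ) + I) ^ 3) = -25 * (π : ℂ) * I / 16 := by
  rw [integral_of_hasDerivAt_of_tendsto hasDerivAt_primitive integrable_integrand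
    (tendsto_primitive IsOrderBornology.atBot_le_cobounded
      (Real.tendsto_arctan_atBot.mono_right nhdsWithin_le_nhds))
    (tendsto_primitive IsOrderBornology.atTop_le_cobounded
      (Real.tendsto_arctan_atTop.mono_right nhdsWithin_le_nhds))]
  push_cast
  ring
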